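/- For a real y ≥ 2, let ⌊y⌋_𝒫 denote the largest primorial not exceeding y, and let q(y) be its largest prime factor (with q(2)... defined via ⌊y⌋_𝒫 = 𝒫_n and q(y) = p_n). Then for every ε > 0 and all sufficiently large y, (1 − ε)·log y ≤ q(y) ≤ (1 + ε)·log y; equivalently, ϑ(p_n) ≤ log y < ϑ(p_{n+1}) where ϑ(t) = Σ_{p ≤ t} log p is Chebyshev's function and 𝒫_n = ⌊y⌋_𝒫. -/

import Mathlib

open Filter Real

/-- The `n`-th prime, 1-indexed: `nthPrime 1 = 2`, `nthPrime 2 = 3`, ... -/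
noncomputable def nthPrime (n : ℕ) : ℕ := Nat.nth Nat.Prime (n - 1)

/-- `N x d` is the number of indices `n ≥ 2` with `pₙ ≤ x` and `pₙ - pₙ₋₁ = d`. -/
noncomputable def N (x : ℝ) (d : ℕ) : ℕ :=
  Set.ncard {n : ℕ | 2 ≤ n ∧ (nthPrime n : ℝ) ≤ x ∧ nthPrime n - nthPrime (n - 1) = d}

/-- `N* x`, the maximal number of occurrences of any gap among consecutive primes up to `x`. -/
noncomputable def Nstar (x : ℝ) : ℕ := sSup (Set.range fun d => N x d)

/-- A positive integer `d` is a jumping champion for `x` if `N x d` attains `max_d N x d`. -/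
def JumpingChampion (x : ℝ) (d : ℕ) : Prop := 0 < d ∧ ∀ e : ℕ, N x e ≤ N x d

/-- `pi2 x d` counts primes `q ≤ x` such that `q - d` is also prime. -/
noncomputable def pi2 (x : ℝ) (d : ℕ) : ℕ :=
  Set.ncard {q : ℕ | q.Prime ∧ (q : ℝ) ≤ x ∧ (q - d).Prime}

/-- `pi3 x d d'` counts primes `q ≤ x` such that `q - d` and `q - d'` are both prime. -/
noncomputable def pi3 (x : ℝ) (d d' : ℕ) : ℕ :=
  Set.ncard {q : ℕ | q.Prime ∧ (q : ℝ) ≤ x ∧ (q - d).Prime ∧ (q - d').Prime}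

/-- The twin prime constant `C₂ = ∏_{p > 2} (1 - 1/(p-1)²)`. -/
noncomputable def C2 : ℝ := ∏' q : {q : ℕ // q.Prime ∧ 2 < q}, (1 - 1 / ((q : ℕ) - 1 : ℝ) ^ 2)

/-- The singular series `𝔖(d)`. -/
noncomputable def singularSeries (d : ℕ) : ℝ :=
  if Even d then
    2 * C2 * ∏ q ∈ d.primeFactors.filter (fun q => 2 < q), ((q : ℝ) - 1) / ((q : ℝ) - 2)
  else 0

/-- `nu d' d q` is the number of distinct residue classes mod `q` occupied by `{0, d', d}`. -/
def nu (d' d : ℕ) (q : ℕ) : ℕ :=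
  ({(0 : ZMod q), (d' : ZMod q), (d : ZMod q)} : Finset (ZMod q)).card

/-- The singular series of the triple `{0, d', d}`. -/
noncomputable def tripleSingularSeries (d' d : ℕ) : ℝ :=
  ∏' q : Nat.Primes, ((1 - 1 / ((q : ℕ) : ℝ)) ^ 3)⁻¹ * (1 - (nu d' d q : ℝ) / ((q : ℕ) : ℝ))

/-- The `k`-th primorial, the product of the first `k` primes. -/
noncomputable def primorialN (k : ℕ) : ℕ := ∏ i ∈ Finset.range k, Nat.nth Nat.Prime i

/-- The index `n` of the largest primorial `𝒫ₙ ≤ y`. -/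
noncomputable def primorialFloorIndex (y : ℝ) : ℕ := sSup {n : ℕ | (primorialN n : ℝ) ≤ y}

/-- Chebyshev's theta function `ϑ(t) = ∑_{p ≤ t} log p`. -/
noncomputable def theta (t : ℝ) : ℝ :=
  ∑ q ∈ (Finset.range (⌊t⌋₊ + 1)).filter Nat.Prime, Real.log q

/-!
The logarithm of the primorial `𝒫ₙ` is `ϑ(pₙ)`, so `log y` lies between `ϑ(pₙ)` and `ϑ(pₙ₊₁)`, which
by Bertrand's postulate exceeds `ϑ(pₙ)` by at most `log (2 pₙ)`. Hence `log y ∼ pₙ` follows from the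
prime number theorem `ϑ(x) ∼ x`.

The latter is an instance of the Wiener–Ikehara theorem. If the Laplace transform of a bounded
function `b` extends continuously to the imaginary axis, then averaging `b` near `u` against a Fejér
kernel amounts to integrating that extension against a compactly supported function times an
oscillating factor of frequency `u`, so by the Riemann–Lebesgue lemma the averages vanish as
`u → ∞`. A slowly decreasing function cannot stay away from its local averages, hence `b → 0`. For
`b(t) = ψ(eᵗ)e⁻ᵗ - 1` the extension exists because `ζ` has no zeros on the line `Re s = 1`.
-/

open MeasureTheory Topology FourierTransform

/-! ### Fejér kernels -/

/-- The tent function of height `1` supported on `[-l, l]`, the compactly supported frequency weight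
whose Fourier transform is nonnegative. -/
noncomputable def tent (l ξ : ℝ) : ℝ := max (1 - |ξ| / l) 0

/-- The Fejér kernel of scale `l`, the Fourier transform of `tent l`; through `sinc` it also has its
right value `l` at the origin. -/
noncomputable def fejerKernel (l t : ℝ) : ℝ := l * sinc (π * l * t) ^ 2

theorem continuous_tent (l : ℝ) : Continuous (tent l) := by
  unfold tent
  fun_prop

theorem tent_eq_zero {l ξ : ℝ} (hl : 0 < l) (hξ : l ≤ |ξ|) : tent l ξ = 0 :=
  max_eq_right (sub_nonpos.2 ((one_le_div hl).2 hξ))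

theorem tent_of_mem_Icc {l ξ : ℝ} (hξ : ξ ∈ Set.Icc 0 l) : tent l ξ = 1 - ξ / l := by
  rw [tent, abs_of_nonneg hξ.1, max_eq_left]
  exact sub_nonneg.2 (div_le_one_of_le₀ hξ.2 (hξ.1.trans hξ.2))

theorem tent_neg (l ξ : ℝ) : tent l (-ξ) = tent l ξ := by
  rw [tent, tent, abs_neg]

theorem tent_zero (l : ℝ) : tent l 0 = 1 := by
  simp [tent]

theorem hasCompactSupport_tent {l : ℝ} (hl : 0 < l) : HasCompactSupport (tent l) :=
  .intro (isCompact_Icc (a := -l) (b := l)) fun _ hξ ↦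
    tent_eq_zero hl (le_of_not_ge fun h ↦ hξ (abs_le.1 h))

theorem fejerKernel_nonneg {l : ℝ} (hl : 0 ≤ l) (t : ℝ) : 0 ≤ fejerKernel l t :=
  mul_nonneg hl (sq_nonneg _)

theorem fejerKernel_eq_mul_fejerKernel_one (l t : ℝ) :
    fejerKernel l t = l * fejerKernel 1 (l * t) := by
  simp only [fejerKernel, mul_one, one_mul, mul_assoc]

theorem sinc_sq_le (x : ℝ) : sinc x ^ 2 ≤ 2 * (1 + x ^ 2)⁻¹ := by
  have h_one : sinc x ^ 2 ≤ 1 := (sq_le_one_iff_abs_le_one _).2 (abs_sinc_le_one x)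
  have h_sin : x ^ 2 * sinc x ^ 2 ≤ 1 := by
    rcases eq_or_ne x 0 with rfl | hx
    · simp
    · rw [sinc_of_ne_zero hx, ← mul_pow, mul_div_cancel₀ _ hx]
      exact sin_sq_le_one x
  rw [← div_eq_mul_inv, le_div_iff₀ (by positivity)]
  linarith

theorem integrable_fejerKernel {l : ℝ} (hl : 0 < l) : Integrable (fejerKernel l) := by
  have h_sinc : Integrable fun x ↦ sinc x ^ 2 :=
    (integrable_inv_one_add_sq.const_mul 2).mono' (by fun_prop) (.of_forall fun x ↦ by
      rw [norm_of_nonneg (sq_nonneg _)]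
      exact sinc_sq_le x)
  exact ((integrable_comp_mul_left_iff _ (by positivity)).2 h_sinc).const_mul l

theorem integral_tent_mul_cos {l ω : ℝ} (hl : 0 < l) :
    ∫ ξ in 0..l, (1 - ξ / l) * (2 * cos (ω * ξ)) = l * sinc (l * ω / 2) ^ 2 := by
  rcases eq_or_ne ω 0 with rfl | hω
  · simp only [zero_mul, cos_zero, mul_one, mul_zero, zero_div, sinc_zero, one_pow]
    rw [intervalIntegral.integral_mul_const, intervalIntegral.integral_sub
      intervalIntegrable_const (intervalIntegral.intervalIntegrable_id.div_const l),
      intervalIntegral.integral_const, intervalIntegral.integral_div, integral_id, smul_eq_mul]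
    field_simp
    ring
  · have h_deriv (ξ : ℝ) : HasDerivAt
        (fun x ↦ 2 * ((1 - x / l) * sin (ω * x) / ω - cos (ω * x) / (l * ω ^ 2)))
        ((1 - ξ / l) * (2 * cos (ω * ξ))) ξ := by
      have h_mul : HasDerivAt (fun x ↦ ω * x) ω ξ := by simpa using (hasDerivAt_id ξ).const_mul ω
      have h_sub : HasDerivAt (fun x : ℝ ↦ 1 - x / l) (-(1 / l)) ξ :=
        ((hasDerivAt_id ξ).div_const l).const_sub 1
      refine ((((h_sub.mul h_mul.sin).div_const ω).sub
        (h_mul.cos.div_const (l * ω ^ 2))).const_mul 2).congr_deriv ?_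
      field_simp
      ring
    rw [intervalIntegral.integral_eq_sub_of_hasDerivAt (fun ξ _ ↦ h_deriv ξ)
      (by apply Continuous.intervalIntegrable; fun_prop),
      sinc_of_ne_zero (by positivity), div_pow, sin_sq_eq_half_sub,
      mul_div_cancel₀ (l * ω) two_ne_zero]
    simp only [mul_zero, sin_zero, cos_zero, div_self hl.ne']
    rw [mul_comm ω l]
    field_simp
    ring

theorem fourier_tent {l : ℝ} (hl : 0 < l) :
    𝓕 (fun ξ ↦ (tent l ξ : ℂ)) = fun t ↦ (fejerKernel l t : ℂ) := by
  ext t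
  set f : ℝ → ℂ := fun ξ ↦ 𝐞 (-(ξ * t)) • (tent l ξ : ℂ) with hf
  have hf_cont : Continuous f := by
    have := continuous_tent l
    fun_prop
  have hf_int (a b : ℝ) : IntervalIntegrable f volume a b := hf_cont.intervalIntegrable a b
  have hf_neg (a b : ℝ) : IntervalIntegrable (fun ξ ↦ f (-ξ)) volume a b :=
    (hf_cont.comp continuous_neg).intervalIntegrable a b
  have hf_supp : Function.support f ⊆ Set.Ioc (-l) l := fun ξ hξ ↦ by
    have h_abs : |ξ| < l := not_le.1 fun h ↦ hξ (by simp [hf, tent_eq_zero hl h])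
    exact ⟨(abs_lt.1 h_abs).1, (abs_lt.1 h_abs).2.le⟩
  have hf_fold : Set.EqOn (fun ξ ↦ f (-ξ) + f ξ)
      (fun ξ ↦ (((1 - ξ / l) * (2 * cos (2 * π * t * ξ)) : ℝ) : ℂ)) (Set.uIcc 0 l) := fun ξ hξ ↦ by
    rw [Set.uIcc_of_le hl.le] at hξ
    simp only [hf, tent_neg, tent_of_mem_Icc hξ, Circle.smul_def, fourierChar_apply, smul_eq_mul]
    push_cast
    rw [Complex.two_cos]
    ring_nf
  calc 𝓕 (fun ξ ↦ (tent l ξ : ℂ)) t = ∫ ξ, f ξ := fourier_real_eq _ _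
    _ = ∫ ξ in -l..l, f ξ := (intervalIntegral.integral_eq_integral_of_support_subset hf_supp).symm
    _ = ∫ ξ in 0..l, (f (-ξ) + f ξ) := by
      rw [intervalIntegral.integral_add (hf_neg 0 l) (hf_int 0 l),
        intervalIntegral.integral_comp_neg, neg_zero,
        intervalIntegral.integral_add_adjacent_intervals (hf_int _ _) (hf_int _ _)]
    _ = fejerKernel l t := by
      rw [intervalIntegral.integral_congr hf_fold, intervalIntegral.integral_ofReal,
        integral_tent_mul_cos hl, fejerKernel]
      ring_nf

theorem integral_fejerKernel {l : ℝ} (hl : 0 < l) : ∫ t, fejerKernel l t = 1 := by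
  have h_cont : Continuous fun ξ ↦ (tent l ξ : ℂ) :=
    Complex.continuous_ofReal.comp (continuous_tent l)
  have h_supp : HasCompactSupport fun ξ ↦ (tent l ξ : ℂ) :=
    (hasCompactSupport_tent hl).comp_left Complex.ofReal_zero
  have h_inv := congrFun (h_cont.fourierInv_fourier_eq (h_cont.integrable_of_hasCompactSupport
    h_supp) (by rw [fourier_tent hl]; exact (integrable_fejerKernel hl).ofReal)) 0
  simp only [fourier_tent hl, fourierInv_eq, inner_zero_right, AddChar.map_zero_eq_one, one_smul,
    integral_complex_ofReal, tent_zero] at h_inv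
  exact_mod_cast h_inv

theorem tendsto_intervalIntegral_fejerKernel {δ : ℝ} (hδ : 0 < δ) :
    Tendsto (fun l ↦ ∫ t in -δ..δ, fejerKernel l t) atTop (𝓝 1) := by
  have h_scale (l : ℝ) :
      ∫ t in -δ..δ, fejerKernel l t = ∫ t in -(l * δ)..l * δ, fejerKernel 1 t := by
    simp only [fejerKernel_eq_mul_fejerKernel_one l]
    rw [intervalIntegral.integral_const_mul, intervalIntegral.mul_integral_comp_mul_left, mul_neg]
  have h_atTop : Tendsto (fun l ↦ l * δ) atTop atTop := tendsto_id.atTop_mul_const hδ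
  simp only [h_scale]
  simpa only [integral_fejerKernel one_pos, Function.comp_def] using
    intervalIntegral_tendsto_integral (integrable_fejerKernel one_pos)
      (tendsto_neg_atTop_atBot.comp h_atTop) h_atTop

/-! ### Laplace transforms on the boundary line -/

/-- `G` continuously extends the Laplace transform of `b` to the closed right half-plane. It carries
the analytic input of the Tauberian theorem; only the values of `b` on `(0, ∞)` matter. -/
structure IsLaplaceExtension (b : ℝ → ℂ) (G : ℂ → ℂ) : Prop where
  continuousOn : ContinuousOn G {s | 0 ≤ s.re}
  integral_eq : ∀ s : ℂ, 0 < s.re → ∫ t in Set.Ioi (0 : ℝ), b t * Complex.exp (-s * t) = G s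

namespace IsLaplaceExtension

variable {b : ℝ → ℂ} {G : ℂ → ℂ} {M : ℝ} {g : ℝ → ℂ}

protected theorem neg (hG : IsLaplaceExtension b G) : IsLaplaceExtension (-b) (-G) where
  continuousOn := hG.continuousOn.neg
  integral_eq s hs := by simp [← hG.integral_eq s hs, integral_neg]

theorem integral_mul_fourier_of_pos (hG : IsLaplaceExtension b G)
    (hb : AEStronglyMeasurable b (volume.restrict (Set.Ioi 0))) (hM : ∀ t, 0 < t → ‖b t‖ ≤ M)
    (hg : Integrable g) {x : ℝ} (hx : 0 < x) :
    ∫ t in Set.Ioi 0, rexp (-x * t) * (b t * 𝓕 g t) =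
      ∫ ξ : ℝ, G (x + 2 * π * ξ * Complex.I) * g ξ := by
  have h_exp : IntegrableOn (fun t ↦ (rexp (-x * t) : ℂ)) (Set.Ioi 0) :=
    (exp_neg_integrableOn_Ioi 0 hx).ofReal
  have h_int : IntegrableOn (fun t ↦ rexp (-x * t) * b t) (Set.Ioi 0) :=
    h_exp.mul_bdd hb (ae_restrict_of_forall_mem measurableSet_Ioi hM)
  have h_flip := VectorFourier.integral_fourierIntegral_smul_eq_flip (L := LinearMap.mul ℝ ℝ)
    continuous_fourierChar (by simpa using continuous_mul) h_int hg
  have h_laplace (ξ : ℝ) : VectorFourier.fourierIntegral 𝐞 (volume.restrict (Set.Ioi 0))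
      (LinearMap.mul ℝ ℝ) (fun t ↦ rexp (-x * t) * b t) ξ = G (x + 2 * π * ξ * Complex.I) := by
    rw [← hG.integral_eq _ (by simpa using hx), VectorFourier.fourierIntegral]
    refine integral_congr_ae (.of_forall fun t ↦ ?_)
    simp only [Circle.smul_def, fourierChar_apply, LinearMap.mul_apply', smul_eq_mul]
    push_cast
    rw [← mul_assoc, ← Complex.exp_add, mul_comm]
    ring_nf
  have h_fourier : VectorFourier.fourierIntegral 𝐞 volume (LinearMap.mul ℝ ℝ).flip g = 𝓕 g := by
    ext t
    simp [VectorFourier.fourierIntegral, fourier_real_eq, mul_comm]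
  simp only [h_laplace, h_fourier, smul_eq_mul, mul_assoc (rexp _ : ℂ)] at h_flip
  exact h_flip.symm

theorem integral_mul_fourier (hG : IsLaplaceExtension b G)
    (hb : AEStronglyMeasurable b (volume.restrict (Set.Ioi 0))) (hM : ∀ t, 0 < t → ‖b t‖ ≤ M)
    (hg : Continuous g) (hg_supp : HasCompactSupport g) (hg_fourier : Integrable (𝓕 g)) :
    ∫ t in Set.Ioi 0, b t * 𝓕 g t = ∫ ξ : ℝ, G (2 * π * ξ * Complex.I) * g ξ := by
  have h_lhs : ContinuousWithinAt
      (fun x : ℝ ↦ ∫ t in Set.Ioi 0, rexp (-x * t) * (b t * 𝓕 g t)) (Set.Ioi 0) 0 := by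
    have h_meas := hb.mul hg_fourier.aestronglyMeasurable.restrict
    refine continuousWithinAt_of_dominated (bound := fun t ↦ M * ‖𝓕 g t‖)
      (.of_forall fun x ↦ (by fun_prop : Continuous _).aestronglyMeasurable.mul h_meas) ?_
      (hg_fourier.norm.const_mul M).integrableOn (.of_forall fun t ↦ by fun_prop)
    filter_upwards [self_mem_nhdsWithin] with x hx
    refine ae_restrict_of_forall_mem measurableSet_Ioi fun t ht ↦ ?_
    rw [norm_mul, norm_mul, Complex.norm_real, norm_of_nonneg (exp_nonneg _)]
    have h_exp : rexp (-x * t) ≤ 1 := exp_le_one_iff.2 (by nlinarith [hx.out, ht.out])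
    have := mul_le_mul_of_nonneg_right (hM t ht) (norm_nonneg (𝓕 g t))
    nlinarith [mul_nonneg (norm_nonneg (b t)) (norm_nonneg (𝓕 g t))]
  have h_rhs : ContinuousOn
      (fun x : ℝ ↦ ∫ ξ : ℝ, G (x + 2 * π * ξ * Complex.I) * g ξ) (Set.Ici 0) := by
    refine continuousOn_integral_of_compact_support hg_supp.isCompact (.mul ?_ (by fun_prop))
      fun x ξ _ hξ ↦ by rw [image_eq_zero_of_notMem_tsupport hξ, mul_zero]
    exact hG.continuousOn.comp (by fun_prop) fun p hp ↦ by simpa using hp.1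
  have h_eq := tendsto_nhds_unique (h_lhs.tendsto.congr' ?_)
    ((h_rhs 0 Set.self_mem_Ici).mono Set.Ioi_subset_Ici_self).tendsto
  · simpa using h_eq
  · filter_upwards [self_mem_nhdsWithin] with x hx
    exact hG.integral_mul_fourier_of_pos hb hM (hg.integrable_of_hasCompactSupport hg_supp) hx

theorem tendsto_integral_mul_fourier_sub (hG : IsLaplaceExtension b G)
    (hb : AEStronglyMeasurable b (volume.restrict (Set.Ioi 0))) (hM : ∀ t, 0 < t → ‖b t‖ ≤ M)
    (hg : Continuous g) (hg_supp : HasCompactSupport g) (hg_fourier : Integrable (𝓕 g)) :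
    Tendsto (fun u ↦ ∫ t in Set.Ioi 0, b t * 𝓕 g (t - u)) atTop (𝓝 0) := by
  have h_mod (u : ℝ) : 𝓕 (fun ξ ↦ (𝐞 (ξ * u) : ℂ) * g ξ) = fun t ↦ 𝓕 g (t - u) := by
    ext t
    simp only [fourier_real_eq, Circle.smul_def, smul_eq_mul, ← mul_assoc, ← Circle.coe_mul,
      ← AddChar.map_add_eq_mul, mul_sub, neg_sub, neg_add_eq_sub]
  have h_parseval (u : ℝ) : ∫ t in Set.Ioi 0, b t * 𝓕 g (t - u) =
      ∫ ξ : ℝ, 𝐞 (-(ξ * -u)) • (G (2 * π * ξ * Complex.I) * g ξ) := by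
    have h_eq := hG.integral_mul_fourier hb hM (g := fun ξ ↦ (𝐞 (ξ * u) : ℂ) * g ξ)
      (by fun_prop) hg_supp.mul_left (by rw [h_mod]; exact hg_fourier.comp_sub_right u)
    simpa only [h_mod, mul_neg, neg_neg, Circle.smul_def, smul_eq_mul, mul_left_comm] using h_eq
  simp only [h_parseval]
  exact (Real.tendsto_integral_exp_smul_cocompact _).comp
    (tendsto_neg_atTop_atBot.mono_right atBot_le_cocompact)

end IsLaplaceExtension

/-! ### Tauberian theorems -/

theorem mul_intervalIntegral_sub_le_integral_mul {b k : ℝ → ℝ} {M ε δ u : ℝ}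
    (hb : AEStronglyMeasurable b (volume.restrict (Set.Ioi 0))) (hM : ∀ t, 0 < t → |b t| ≤ M)
    (hk_nonneg : ∀ t, 0 ≤ k t) (hk : Integrable k) (hk_one : ∫ t, k t = 1) (hδ : 0 ≤ δ)
    (hu : δ < u) (h_near : ∀ t, |t - u| ≤ δ → ε ≤ b t) :
    (M + ε) * (∫ t in -δ..δ, k t) - M ≤ ∫ t in Set.Ioi 0, b t * k (t - u) := by
  have hM_nonneg : 0 ≤ M := (abs_nonneg _).trans (hM 1 one_pos)
  have h_shift : Integrable fun t ↦ k (t - u) := hk.comp_sub_right u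
  have h_bk : IntegrableOn (fun t ↦ b t * k (t - u)) (Set.Ioi 0) :=
    h_shift.integrableOn.bdd_mul hb (ae_restrict_of_forall_mem measurableSet_Ioi hM)
  have h_Mk : IntegrableOn (fun t ↦ M * k (t - u)) (Set.Ioi 0) :=
    (h_shift.const_mul M).integrableOn
  have h_subset : Set.Ioc (u - δ) (u + δ) ⊆ Set.Ioi 0 := fun t ht ↦ (sub_pos.2 hu).trans ht.1
  have h_mass : ∫ t in Set.Ioi 0, k (t - u) ≤ 1 := by
    rw [← hk_one, ← integral_sub_right_eq_self k u]
    exact setIntegral_le_integral h_shift (.of_forall fun t ↦ hk_nonneg _)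
  rw [sub_le_iff_le_add]
  calc (M + ε) * ∫ t in -δ..δ, k t
      = ∫ t in Set.Ioc (u - δ) (u + δ), (M + ε) * k (t - u) := by
        rw [integral_const_mul, ← intervalIntegral.integral_of_le (by linarith),
          intervalIntegral.integral_comp_sub_right, sub_sub_cancel_left, add_sub_cancel_left]
    _ ≤ ∫ t in Set.Ioc (u - δ) (u + δ), (b t * k (t - u) + M * k (t - u)) := by
        refine setIntegral_mono_on (h_shift.const_mul _).integrableOn
          ((h_bk.add h_Mk).mono_set h_subset) measurableSet_Ioc fun t ht ↦ ?_
        rw [← add_mul, add_comm M]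
        have := h_near t (abs_le.2 ⟨by linarith [ht.1], by linarith [ht.2]⟩)
        gcongr
        exact hk_nonneg _
    _ ≤ ∫ t in Set.Ioi 0, (b t * k (t - u) + M * k (t - u)) := by
        refine setIntegral_mono_set (h_bk.add h_Mk)
          (ae_restrict_of_forall_mem measurableSet_Ioi fun t ht ↦ ?_) (.of_forall h_subset)
        refine (mul_nonneg ?_ (hk_nonneg _)).trans_eq (add_mul (b t) M _)
        linarith [neg_le_of_abs_le (hM t ht)]
    _ = (∫ t in Set.Ioi 0, b t * k (t - u)) + M * ∫ t in Set.Ioi 0, k (t - u) := by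
        rw [integral_add h_bk h_Mk, integral_const_mul]
    _ ≤ (∫ t in Set.Ioi 0, b t * k (t - u)) + M := by
        gcongr
        exact mul_le_of_le_one_right hM_nonneg h_mass

namespace IsLaplaceExtension

variable {b : ℝ → ℝ} {G : ℂ → ℂ} {M : ℝ}

theorem tendsto_integral_mul_fejerKernel_sub (hG : IsLaplaceExtension (fun t ↦ b t) G)
    (hb : AEStronglyMeasurable b (volume.restrict (Set.Ioi 0))) (hM : ∀ t, 0 < t → |b t| ≤ M)
    {l : ℝ} (hl : 0 < l) :
    Tendsto (fun u ↦ ∫ t in Set.Ioi 0, b t * fejerKernel l (t - u)) atTop (𝓝 0) := by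
  have h_cont : Continuous fun ξ ↦ (tent l ξ : ℂ) :=
    Complex.continuous_ofReal.comp (continuous_tent l)
  have h_lim := hG.tendsto_integral_mul_fourier_sub
    (Complex.continuous_ofReal.comp_aestronglyMeasurable hb) (by simpa using hM) h_cont
    ((hasCompactSupport_tent hl).comp_left Complex.ofReal_zero)
    (by rw [fourier_tent hl]; exact (integrable_fejerKernel hl).ofReal)
  simp only [fourier_tent hl, ← Complex.ofReal_mul, integral_complex_ofReal] at h_lim
  exact tendsto_ofReal_iff.1 (by simpa using h_lim)

theorem eventually_exists_lt (hG : IsLaplaceExtension (fun t ↦ b t) G)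
    (hb : AEStronglyMeasurable b (volume.restrict (Set.Ioi 0))) (hM : ∀ t, 0 < t → |b t| ≤ M)
    {ε δ : ℝ} (hε : 0 < ε) (hδ : 0 < δ) : ∀ᶠ u in atTop, ∃ t, |t - u| ≤ δ ∧ b t < ε := by
  have h_mass : Tendsto (fun l ↦ (M + ε) * (∫ t in -δ..δ, fejerKernel l t) - M) atTop (𝓝 ε) := by
    simpa using ((tendsto_intervalIntegral_fejerKernel hδ).const_mul (M + ε)).sub_const M
  obtain ⟨l, h_large, hl⟩ :=
    ((h_mass.eventually_const_lt (half_lt_self hε)).and (eventually_gt_atTop 0)).exists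
  filter_upwards [(hG.tendsto_integral_mul_fejerKernel_sub hb hM hl).eventually_lt_const
    (half_pos hε), eventually_gt_atTop δ] with u h_small hu
  by_contra! h_near
  exact (h_small.trans h_large).not_ge (mul_intervalIntegral_sub_le_integral_mul hb hM
    (fejerKernel_nonneg hl.le) (integrable_fejerKernel hl) (integral_fejerKernel hl)
    hδ.le hu h_near)

end IsLaplaceExtension

/-- Slow decrease at infinity in the sense of R. Schmidt, the one-sided Tauberian condition. -/
def SlowlyDecreasing (b : ℝ → ℝ) : Prop :=
  ∀ ε > 0, ∃ δ > 0, ∀ᶠ s in atTop, ∀ t ∈ Set.Icc s (s + δ), b s - ε ≤ b t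

theorem SlowlyDecreasing.sub_const {b : ℝ → ℝ} (hb : SlowlyDecreasing b) (A : ℝ) :
    SlowlyDecreasing (fun t ↦ b t - A) := fun ε hε ↦ by
  obtain ⟨δ, hδ, h_slow⟩ := hb ε hε
  refine ⟨δ, hδ, h_slow.mono fun s hs t ht ↦ ?_⟩
  linarith [hs t ht]

theorem slowlyDecreasing_mul_exp_neg {f : ℝ → ℝ} {C : ℝ} (hf : Monotone f)
    (hf_nonneg : ∀ t, 0 ≤ f t) (hC : ∀ᶠ t in atTop, f t * rexp (-t) ≤ C) :
    SlowlyDecreasing (fun t ↦ f t * rexp (-t)) := by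
  intro ε hε
  have hC_nonneg : 0 ≤ C := by
    obtain ⟨t, ht⟩ := hC.exists
    exact (mul_nonneg (hf_nonneg t) (exp_nonneg _)).trans ht
  refine ⟨ε / (C + 1), by positivity, hC.mono fun s hs t ht ↦ ?_⟩
  have h_exp : 1 - ε / (C + 1) ≤ rexp (s - t) := by
    linarith [ht.2, add_one_le_exp (s - t)]
  have h_loss : f s * rexp (-s) * (ε / (C + 1)) ≤ ε := by
    rw [mul_div_assoc', div_le_iff₀ (by positivity), mul_comm ε]
    gcongr
    linarith
  calc f s * rexp (-s) - ε ≤ f s * rexp (-s) * (1 - ε / (C + 1)) := by linarith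
    _ ≤ f s * rexp (-s) * rexp (s - t) := by
        gcongr
        exact mul_nonneg (hf_nonneg s) (exp_nonneg _)
    _ = f s * rexp (-t) := by
        rw [mul_assoc, ← exp_add]
        ring_nf
    _ ≤ f t * rexp (-t) := by
        gcongr
        exact hf ht.1

theorem SlowlyDecreasing.tendsto_zero {b : ℝ → ℝ} {G : ℂ → ℂ} {M : ℝ} (h_slow : SlowlyDecreasing b)
    (hb : AEStronglyMeasurable b (volume.restrict (Set.Ioi 0))) (hM : ∀ t, 0 < t → |b t| ≤ M)
    (hG : IsLaplaceExtension (fun t ↦ b t) G) : Tendsto b atTop (𝓝 0) := by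
  refine Metric.tendsto_nhds.2 fun ε hε ↦ ?_
  obtain ⟨δ, hδ, h_decr⟩ := h_slow (ε / 2) (half_pos hε)
  obtain ⟨T, hT⟩ := eventually_atTop.1 h_decr
  have hG_neg : IsLaplaceExtension (fun t ↦ (-b) t) (-G) := by
    simpa [Pi.neg_def] using hG.neg
  have h_above := (tendsto_atTop_add_const_right _ (δ / 2) tendsto_id).eventually
    (hG.eventually_exists_lt hb hM (half_pos hε) (half_pos hδ))
  have h_below := (tendsto_atTop_add_const_right _ (-(δ / 2)) tendsto_id).eventually
    (hG_neg.eventually_exists_lt hb.neg (by simpa using hM) (half_pos hε) (half_pos hδ))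
  filter_upwards [h_above, h_below, eventually_ge_atTop (T + δ)]
    with u ⟨t, ht, h_lt⟩ ⟨s, hs, h_gt⟩ hu
  simp only [id_eq, abs_le, Pi.neg_apply] at ht hs h_gt
  have h_upper := hT u (by linarith) t ⟨by linarith, by linarith⟩
  have h_lower := hT s (by linarith) u ⟨by linarith, by linarith⟩
  rw [dist_zero_right, norm_eq_abs, abs_lt]
  constructor <;> linarith

/-- The summatory function of an arithmetic function `a`, as a function of a real variable. The
value `a 0` is left out, as it is in `LSeries`. -/
noncomputable def summatory (a : ℕ → ℝ) (x : ℝ) : ℝ := ∑ n ∈ Finset.Icc 1 ⌊x⌋₊, a n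

section Summatory

variable {a : ℕ → ℝ}

theorem summatory_nonneg (ha : ∀ n, 0 ≤ a n) (x : ℝ) : 0 ≤ summatory a x :=
  Finset.sum_nonneg fun n _ ↦ ha n

theorem monotone_summatory (ha : ∀ n, 0 ≤ a n) : Monotone (summatory a) := fun _ _ h ↦
  Finset.sum_le_sum_of_subset_of_nonneg (Finset.Icc_subset_Icc_right (Nat.floor_mono h))
    fun n _ _ ↦ ha n

theorem exists_summatory_le_mul
    (hO : (fun n ↦ ∑ k ∈ Finset.Icc 1 n, a k) =O[atTop] fun n ↦ (n : ℝ)) :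
    ∃ C, ∀ x, 0 ≤ x → summatory a x ≤ C * x := by
  obtain ⟨C, hC⟩ := (Asymptotics.isBigO_nat_atTop_iff (by simp)).1 hO
  have hC_nonneg : 0 ≤ C := by simpa using (norm_nonneg _).trans (hC 1)
  refine ⟨C, fun x hx ↦ ?_⟩
  calc summatory a x ≤ C * ‖(⌊x⌋₊ : ℝ)‖ := (le_norm_self _).trans (hC _)
    _ ≤ C * x := by
        rw [norm_natCast]
        gcongr
        exact Nat.floor_le hx

theorem LSeries_eq_mul_integral_summatory_exp (ha : ∀ n, 0 ≤ a n)
    (hO : (fun n ↦ ∑ k ∈ Finset.Icc 1 n, a k) =O[atTop] fun n ↦ (n : ℝ)) {s : ℂ} (hs : 1 < s.re) :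
    LSeries (fun n ↦ a n) s =
      s * ∫ t in Set.Ioi 0, summatory a (rexp t) * Complex.exp (-s * t) := by
  rw [LSeries_eq_mul_integral_of_nonneg a zero_le_one hs (by simpa using hO) ha,
    ← exp_zero, ← image_exp_Ioi, integral_image_eq_integral_abs_deriv_smul measurableSet_Ioi
      (fun x _ ↦ (hasDerivAt_exp x).hasDerivWithinAt) exp_injective.injOn]
  congr 1
  refine setIntegral_congr_fun measurableSet_Ioi fun t _ ↦ ?_
  simp only [abs_of_pos (exp_pos t), Complex.real_smul, summatory, Complex.ofReal_sum]
  rw [mul_left_comm, Complex.cpow_def_of_ne_zero (by exact_mod_cast (exp_pos t).ne'),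
    ← Complex.ofReal_log (exp_pos t).le, log_exp, Complex.ofReal_exp, ← Complex.exp_add]
  ring_nf

theorem integral_summatory_exp_mul_exp_neg (ha : ∀ n, 0 ≤ a n)
    (hO : (fun n ↦ ∑ k ∈ Finset.Icc 1 n, a k) =O[atTop] fun n ↦ (n : ℝ)) {s : ℂ} (hs : 0 < s.re) :
    ∫ t in Set.Ioi (0 : ℝ), ((summatory a (rexp t) * rexp (-t) : ℝ) : ℂ) * Complex.exp (-s * t) =
      LSeries (fun n ↦ a n) (s + 1) / (s + 1) := by
  have hs_shift : 1 < (s + 1).re := by simpa using hs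
  rw [LSeries_eq_mul_integral_summatory_exp ha hO hs_shift,
    mul_div_cancel_left₀ _ (Complex.ne_zero_of_re_pos (one_pos.trans hs_shift))]
  refine setIntegral_congr_fun measurableSet_Ioi fun t _ ↦ ?_
  simp only [Complex.ofReal_mul, Complex.ofReal_exp, mul_assoc, ← Complex.exp_add]
  push_cast
  ring_nf

theorem measurable_summatory_exp_mul_exp_neg (ha : ∀ n, 0 ≤ a n) :
    Measurable fun t ↦ summatory a (rexp t) * rexp (-t) :=
  ((monotone_summatory ha).measurable.comp measurable_exp).mul (by fun_prop)

theorem exists_abs_summatory_exp_mul_exp_neg_le (ha : ∀ n, 0 ≤ a n)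
    (hO : (fun n ↦ ∑ k ∈ Finset.Icc 1 n, a k) =O[atTop] fun n ↦ (n : ℝ)) :
    ∃ C, ∀ t, |summatory a (rexp t) * rexp (-t)| ≤ C := by
  obtain ⟨C, hC⟩ := exists_summatory_le_mul hO
  refine ⟨C, fun t ↦ ?_⟩
  rw [abs_of_nonneg (mul_nonneg (summatory_nonneg ha _) (exp_nonneg _)),
    ← mul_inv_cancel_right₀ (exp_ne_zero t) C, ← exp_neg]
  exact mul_le_mul_of_nonneg_right (hC _ (exp_nonneg t)) (exp_nonneg _)

theorem isLaplaceExtension_summatory_exp {A : ℝ} {G : ℂ → ℂ} (ha : ∀ n, 0 ≤ a n)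
    (hO : (fun n ↦ ∑ k ∈ Finset.Icc 1 n, a k) =O[atTop] fun n ↦ (n : ℝ))
    (hG : ContinuousOn G {s | 1 ≤ s.re})
    (hLG : ∀ s : ℂ, 1 < s.re → LSeries (fun n ↦ a n) s = G s + A / (s - 1)) :
    IsLaplaceExtension (fun t ↦ ((summatory a (rexp t) * rexp (-t) - A : ℝ) : ℂ))
      (fun s ↦ (G (s + 1) - A) / (s + 1)) where
  continuousOn := by
    refine ((hG.comp (by fun_prop) fun s hs ↦ ?_).sub continuousOn_const).div (by fun_prop)
      fun s hs ↦ Complex.ne_zero_of_re_pos ?_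
    · simpa using hs
    · simpa using add_pos_of_nonneg_of_pos hs one_pos
  integral_eq s hs := by
    have hs_shift : 1 < (s + 1).re := by simpa using hs
    have hs_ne : s ≠ 0 := Complex.ne_zero_of_re_pos hs
    have hs_shift_ne : s + 1 ≠ 0 := Complex.ne_zero_of_re_pos (one_pos.trans hs_shift)
    obtain ⟨C, hC⟩ := exists_abs_summatory_exp_mul_exp_neg_le ha hO
    have h_exp := integrableOn_exp_mul_complex_Ioi (a := -s) (by simpa using hs) 0
    have h_int : IntegrableOn (fun t : ℝ ↦
        ((summatory a (rexp t) * rexp (-t) : ℝ) : ℂ) * Complex.exp (-s * t)) (Set.Ioi 0) :=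
      h_exp.bdd_mul (c := C) (Complex.measurable_ofReal.comp
        (measurable_summatory_exp_mul_exp_neg ha)).aestronglyMeasurable
        (.of_forall fun t ↦ (Complex.norm_real _).trans_le (hC t))
    simp only [Complex.ofReal_sub _ A, sub_mul]
    rw [integral_sub h_int (h_exp.const_mul _),
      integral_summatory_exp_mul_exp_neg ha hO hs, hLG _ hs_shift, add_sub_cancel_right,
      integral_const_mul, integral_exp_mul_complex_Ioi (by simpa using hs)]
    simp only [Complex.ofReal_zero, mul_zero, Complex.exp_zero]
    field_simp
    ring

theorem tendsto_summatory_div_atTop {A : ℝ} {G : ℂ → ℂ} (ha : ∀ n, 0 ≤ a n)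
    (hO : (fun n ↦ ∑ k ∈ Finset.Icc 1 n, a k) =O[atTop] fun n ↦ (n : ℝ))
    (hG : ContinuousOn G {s | 1 ≤ s.re})
    (hLG : ∀ s : ℂ, 1 < s.re → LSeries (fun n ↦ a n) s = G s + A / (s - 1)) :
    Tendsto (fun x ↦ summatory a x / x) atTop (𝓝 A) := by
  obtain ⟨C, hC⟩ := exists_abs_summatory_exp_mul_exp_neg_le ha hO
  have h_slow := slowlyDecreasing_mul_exp_neg ((monotone_summatory ha).comp exp_monotone)
    (fun t ↦ summatory_nonneg ha _) (.of_forall fun t ↦ (le_abs_self _).trans (hC t))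
  have h_zero := (h_slow.sub_const A).tendsto_zero (M := C + |A|)
    ((measurable_summatory_exp_mul_exp_neg ha).sub_const A).aestronglyMeasurable
    (fun t _ ↦ (abs_sub _ _).trans (add_le_add_left (hC t) _))
    (isLaplaceExtension_summatory_exp ha hO hG hLG)
  refine ((tendsto_sub_nhds_zero_iff.1 h_zero).comp tendsto_log_atTop).congr' ?_
  filter_upwards [eventually_gt_atTop 0] with x hx
  simp only [Function.comp_apply, exp_neg, exp_log hx, div_eq_mul_inv]

end Summatory

/-! ### The prime number theorem -/

theorem summatory_vonMangoldt (x : ℝ) :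
    summatory (fun n ↦ ArithmeticFunction.vonMangoldt n) x = Chebyshev.psi x := rfl

theorem isBigO_sum_residueClass {q : ℕ} (a : ZMod q) :
    (fun n ↦ ∑ k ∈ Finset.Icc 1 n, ArithmeticFunction.vonMangoldt.residueClass a k) =O[atTop]
      fun n ↦ (n : ℝ) := by
  refine .of_bound (log 4 + 4) (.of_forall fun n ↦ ?_)
  rw [norm_of_nonneg (Finset.sum_nonneg fun k _ ↦
    ArithmeticFunction.vonMangoldt.residueClass_nonneg a k), norm_natCast]
  calc ∑ k ∈ Finset.Icc 1 n, ArithmeticFunction.vonMangoldt.residueClass a k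
      ≤ ∑ k ∈ Finset.Icc 1 n, ArithmeticFunction.vonMangoldt k :=
        Finset.sum_le_sum fun k _ ↦ ArithmeticFunction.vonMangoldt.residueClass_le a k
    _ = Chebyshev.psi n := by rw [← summatory_vonMangoldt, summatory, Nat.floor_natCast]
    _ ≤ (log 4 + 4) * n := Chebyshev.psi_le_const_mul_self n.cast_nonneg

theorem tendsto_summatory_residueClass_div_atTop {q : ℕ} [NeZero q] {a : ZMod q}
    (ha : IsUnit a) :
    Tendsto (fun x ↦ summatory (ArithmeticFunction.vonMangoldt.residueClass a) x / x) atTop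
      (𝓝 (q.totient : ℝ)⁻¹) := by
  refine tendsto_summatory_div_atTop (ArithmeticFunction.vonMangoldt.residueClass_nonneg a)
    (isBigO_sum_residueClass a)
    (ArithmeticFunction.vonMangoldt.continuousOn_LFunctionResidueClassAux a) fun s hs ↦ ?_
  rw [ArithmeticFunction.vonMangoldt.eqOn_LFunctionResidueClassAux ha hs]
  push_cast
  rw [sub_add_cancel]

theorem tendsto_psi_div_atTop : Tendsto (fun x ↦ Chebyshev.psi x / x) atTop (𝓝 1) := by
  have h_class : ArithmeticFunction.vonMangoldt.residueClass (1 : ZMod 1) =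
      fun n ↦ ArithmeticFunction.vonMangoldt n := by
    ext n
    rw [ArithmeticFunction.vonMangoldt.residueClass, Set.indicator_of_mem]
    exact Subsingleton.elim (n : ZMod 1) 1
  have h_tendsto := tendsto_summatory_residueClass_div_atTop (isUnit_one (M := ZMod 1))
  simpa only [h_class, summatory_vonMangoldt, Nat.totient_one, Nat.cast_one, inv_one]
    using h_tendsto

theorem tendsto_chebyshevTheta_div_atTop :
    Tendsto (fun x ↦ Chebyshev.theta x / x) atTop (𝓝 1) := by
  have h_littleO : (fun x ↦ √x) =o[atTop] fun x : ℝ ↦ x := by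
    refine Asymptotics.isLittleO_of_tendsto' ((eventually_ne_atTop 0).mono fun x hx h ↦
      absurd h hx) ?_
    simpa only [sqrt_div_self, Function.comp_def] using
      tendsto_inv_atTop_zero.comp tendsto_sqrt_atTop
  have h_diff := (Chebyshev.isBigO_psi_sub_theta_sqrt.trans_isLittleO h_littleO)
    |>.tendsto_div_nhds_zero
  have h_theta := tendsto_psi_div_atTop.sub h_diff
  rw [sub_zero] at h_theta
  refine h_theta.congr fun x ↦ ?_
  rw [Pi.sub_apply, ← sub_div, sub_sub_cancel]

/-! ### Primorials -/

theorem theta_eq_chebyshevTheta (t : ℝ) : theta t = Chebyshev.theta t := by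
  rw [theta, Chebyshev.theta_eq_sum_Icc, Nat.range_succ_eq_Icc_zero]

theorem tendsto_theta_div_atTop : Tendsto (fun x ↦ theta x / x) atTop (𝓝 1) := by
  simpa only [theta_eq_chebyshevTheta] using tendsto_chebyshevTheta_div_atTop

theorem nthPrime_succ (k : ℕ) : nthPrime (k + 1) = Nat.nth Nat.Prime k := rfl

theorem nthPrime_prime (n : ℕ) : (nthPrime n).Prime := Nat.prime_nth_prime _

theorem tendsto_nthPrime_atTop : Tendsto nthPrime atTop atTop :=
  (Nat.nth_strictMono Nat.infinite_setOfPred_prime).tendsto_atTop.comp (tendsto_sub_atTop_nat 1)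

theorem nthPrime_succ_le_two_mul (n : ℕ) : nthPrime (n + 1) ≤ 2 * nthPrime n := by
  obtain ⟨p, hp, h_lt, h_le⟩ := Nat.exists_prime_lt_and_le_two_mul _ (nthPrime_prime n).ne_zero
  refine le_trans ?_ h_le
  rw [nthPrime, ← Nat.nth_count hp] at h_lt
  rw [nthPrime_succ, ← Nat.nth_count hp]
  have h_count := (Nat.nth_lt_nth Nat.infinite_setOfPred_prime).1 h_lt
  exact (Nat.nth_le_nth Nat.infinite_setOfPred_prime).2 (by omega)

theorem primorialN_succ (k : ℕ) : primorialN (k + 1) = primorialN k * nthPrime (k + 1) :=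
  Finset.prod_range_succ _ _

theorem primorialN_pos (k : ℕ) : 0 < primorialN k :=
  Finset.prod_pos fun i _ ↦ (Nat.prime_nth_prime i).pos

theorem two_pow_le_primorialN (k : ℕ) : 2 ^ k ≤ primorialN k := by
  simpa [primorialN] using Finset.pow_card_le_prod (Finset.range k) (Nat.nth Nat.Prime) 2
    fun i _ ↦ (Nat.prime_nth_prime i).two_le

theorem filter_range_nth_eq_image {p : ℕ → Prop} [DecidablePred p] (hp : (Set.ofPred p).Infinite)
    (k : ℕ) : {n ∈ Finset.range (Nat.nth p k) | p n} = (Finset.range k).image (Nat.nth p) := by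
  induction k with
  | zero =>
    rw [Finset.range_zero, Finset.image_empty, Finset.filter_eq_empty_iff, Nat.nth_zero]
    exact fun n hn ↦ Nat.notMem_of_lt_sInf (Finset.mem_range.1 hn)
  | succ k ih =>
    rw [Nat.filter_range_nth_eq_insert_of_infinite hp, ih, Finset.range_add_one,
      Finset.image_insert]

theorem theta_nthPrime {n : ℕ} (hn : 1 ≤ n) : theta (nthPrime n) = log (primorialN n) := by
  obtain ⟨k, rfl⟩ := Nat.exists_eq_add_of_le' hn
  have h_nth := Nat.nth_strictMono Nat.infinite_setOfPred_prime
  have h_primes : {q ∈ Finset.range (nthPrime (k + 1) + 1) | q.Prime} =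
      (Finset.range (k + 1)).image (Nat.nth Nat.Prime) := by
    rw [← filter_range_nth_eq_image Nat.infinite_setOfPred_prime,
      Nat.filter_range_nth_eq_insert_of_infinite Nat.infinite_setOfPred_prime,
      Finset.range_add_one, Finset.filter_insert, if_pos (nthPrime_prime _), nthPrime_succ]
  rw [theta, Nat.floor_natCast, h_primes, Finset.sum_image h_nth.injective.injOn, primorialN,
    Nat.cast_prod, log_prod fun i _ ↦ by exact_mod_cast (Nat.prime_nth_prime i).ne_zero]

theorem bddAbove_setOf_primorialN_le (y : ℝ) : BddAbove {n : ℕ | (primorialN n : ℝ) ≤ y} := by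
  refine ⟨⌊y⌋₊, fun n hn ↦ Nat.le_floor (le_trans ?_ hn)⟩
  exact_mod_cast Nat.lt_two_pow_self.le.trans (two_pow_le_primorialN n)

theorem le_primorialFloorIndex {y : ℝ} {m : ℕ} (h : (primorialN m : ℝ) ≤ y) :
    m ≤ primorialFloorIndex y :=
  le_csSup (bddAbove_setOf_primorialN_le y) h

theorem tendsto_primorialFloorIndex_atTop : Tendsto primorialFloorIndex atTop atTop :=
  tendsto_atTop.2 fun m ↦ (eventually_ge_atTop (primorialN m : ℝ)).mono fun _ ↦
    le_primorialFloorIndex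

theorem one_le_primorialFloorIndex {y : ℝ} (hy : 2 ≤ y) : 1 ≤ primorialFloorIndex y :=
  le_primorialFloorIndex (by simpa [primorialN, Nat.nth_prime_zero_eq_two] using hy)

theorem primorialN_primorialFloorIndex_le {y : ℝ} (hy : 1 ≤ y) :
    (primorialN (primorialFloorIndex y) : ℝ) ≤ y :=
  Nat.sSup_mem (s := {n : ℕ | (primorialN n : ℝ) ≤ y}) ⟨0, by simpa [primorialN] using hy⟩
    (bddAbove_setOf_primorialN_le y)

theorem lt_primorialN_primorialFloorIndex_succ (y : ℝ) :
    y < primorialN (primorialFloorIndex y + 1) :=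
  not_le.1 fun h ↦ (le_primorialFloorIndex h).not_gt (Nat.lt_succ_self _)

theorem theta_le_log_and_log_lt_theta {y : ℝ} (hy : 2 ≤ y) :
    theta (nthPrime (primorialFloorIndex y)) ≤ log y ∧
      log y < theta (nthPrime (primorialFloorIndex y + 1)) := by
  rw [theta_nthPrime (one_le_primorialFloorIndex hy), theta_nthPrime (Nat.le_add_left 1 _)]
  exact ⟨log_le_log (by exact_mod_cast primorialN_pos _)
    (primorialN_primorialFloorIndex_le (by linarith)),
    log_lt_log (by linarith) (lt_primorialN_primorialFloorIndex_succ y)⟩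

theorem theta_nthPrime_succ_le {n : ℕ} (hn : 1 ≤ n) :
    theta (nthPrime (n + 1)) ≤ theta (nthPrime n) + log (2 * nthPrime n) := by
  have h_pos := primorialN_pos n
  have h_prime := (nthPrime_prime (n + 1)).pos
  rw [theta_nthPrime hn, theta_nthPrime (by omega), primorialN_succ, Nat.cast_mul,
    log_mul (by positivity) (by positivity)]
  gcongr
  exact_mod_cast nthPrime_succ_le_two_mul n

theorem tendsto_log_two_mul_div_atTop : Tendsto (fun x : ℝ ↦ log (2 * x) / x) atTop (𝓝 0) := by
  have h_log := (isLittleO_log_id_atTop.comp_tendsto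
    (tendsto_id.const_mul_atTop (two_pos (α := ℝ)))).tendsto_div_nhds_zero.const_mul 2
  rw [mul_zero] at h_log
  refine h_log.congr fun x ↦ ?_
  simp only [Function.comp_apply, id_eq]
  field_simp

theorem tendsto_log_div_nthPrime_primorialFloorIndex :
    Tendsto (fun y : ℝ ↦ log y / nthPrime (primorialFloorIndex y)) atTop (𝓝 1) := by
  set q : ℝ → ℝ := fun y ↦ nthPrime (primorialFloorIndex y)
  have hq : Tendsto q atTop atTop := tendsto_natCast_atTop_atTop.comp
    (tendsto_nthPrime_atTop.comp tendsto_primorialFloorIndex_atTop)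
  have h_theta := tendsto_theta_div_atTop.comp hq
  have h_upper := h_theta.add (tendsto_log_two_mul_div_atTop.comp hq)
  rw [add_zero] at h_upper
  refine tendsto_of_tendsto_of_tendsto_of_le_of_le' h_theta h_upper ?_ ?_ <;>
    filter_upwards [eventually_ge_atTop 2] with y hy
  · exact div_le_div_of_nonneg_right (theta_le_log_and_log_lt_theta hy).1 (Nat.cast_nonneg _)
  · simp only [Function.comp_apply, ← add_div]
    exact div_le_div_of_nonneg_right ((theta_le_log_and_log_lt_theta hy).2.le.trans
      (theta_nthPrime_succ_le (one_le_primorialFloorIndex hy))) (Nat.cast_nonneg _)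

/-- The largest prime factor `q(y) = p_{n(y)}` of the largest primorial `𝒫_{n(y)} ≤ y`
satisfies `(1−ε)·log y ≤ q(y) ≤ (1+ε)·log y` for all large `y`; equivalently, with
`n = n(y)`, one has `ϑ(pₙ) ≤ log y < ϑ(pₙ₊₁)`. -/
theorem largest_prime_factor_of_primorialFloor :
    (∀ ε : ℝ, 0 < ε → ∃ Y : ℝ, ∀ y ≥ Y,
      (1 - ε) * Real.log y ≤ (nthPrime (primorialFloorIndex y) : ℝ) ∧
      (nthPrime (primorialFloorIndex y) : ℝ) ≤ (1 + ε) * Real.log y) ∧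
    (∀ y : ℝ, 2 ≤ y →
      theta (nthPrime (primorialFloorIndex y)) ≤ Real.log y ∧
      Real.log y < theta (nthPrime (primorialFloorIndex y + 1))) := by
  refine ⟨fun ε hε ↦ ?_, fun y hy ↦ theta_le_log_and_log_lt_theta hy⟩
  have h_ratio :
      Tendsto (fun y ↦ (nthPrime (primorialFloorIndex y) : ℝ) / log y) atTop (𝓝 1) := by
    simpa using tendsto_log_div_nthPrime_primorialFloorIndex.inv₀ one_ne_zero
  have h_near := h_ratio.eventually_mem (Icc_mem_nhds (sub_lt_self 1 hε) (lt_add_of_pos_right 1 hε))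
  refine eventually_atTop.1 ?_
  filter_upwards [h_near, eventually_gt_atTop 1] with y ⟨h_lower, h_upper⟩ hy
  exact ⟨(le_div_iff₀ (log_pos hy)).1 h_lower, (div_le_iff₀ (log_pos hy)).1 h_upper⟩
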